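/- If a b-convex body K in a Minkowski space is not b-bounded (i.e., rad(K) = 1), then K has no b-exposed points: b-exp(K) = ∅. -/

import Mathlib

open Metric Set

/-- The ball hull of `S`: intersection of all closed balls of radius 1 containing `S`. -/
def ballHull {E : Type*} [NormedAddCommGroup E] (S : Set E) : Set E :=
  ⋂ x ∈ {x : E | S ⊆ closedBall x 1}, closedBall x 1

/-- The circumradius of `S`: the least `r ≥ 0` such that `S` is contained in some
closed ball of radius `r`. -/
noncomputable def circumradius {E : Type*} [NormedAddCommGroup E] (S : Set E) : ℝ :=
  sInf {r : ℝ | 0 ≤ r ∧ ∃ x : E, S ⊆ closedBall x r}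

/-- A b-convex body: a bounded nonempty set equal to its ball hull. -/
def IsBConvexBody {E : Type*} [NormedAddCommGroup E] (K : Set E) : Prop :=
  Bornology.IsBounded K ∧ K.Nonempty ∧ ballHull K = K

/-- `F` is an exposed b-face of `K`: `F = K ∩ S(y,1)` for some supporting sphere `S(y,1)`. -/
def IsExposedBFace {E : Type*} [NormedAddCommGroup E] (K F : Set E) : Prop :=
  ∃ y : E, K ⊆ closedBall y 1 ∧ (K ∩ sphere y 1).Nonempty ∧ F = K ∩ sphere y 1

/-- The set of b-exposed points of `K`. -/
def bExp {E : Type*} [NormedAddCommGroup E] (K : Set E) : Set E :=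
  {x : E | ∃ y : E, K ⊆ closedBall y 1 ∧ K ∩ sphere y 1 = {x}}

/-!
If a compact set `K` lies in `closedBall y r` and meets the bounding sphere only inside `ball x r`,
then moving the center slightly from `y` towards `x` puts `K` inside an open ball of radius `r`.
Points of `K` in `ball x r` stay at distance less than `r` by convexity of balls; the other points
form a compact set off the sphere, so they are uniformly closer than `r` to `y`, and a short move
keeps them so. By compactness the radius can then be decreased. A b-exposed point `x` gives
`K ∩ sphere y 1 = {x}`, which is inside `ball x 1`.
-/

open scoped Topology

theorem exists_lt_subset_closedBall_of_isCompact {α : Type*} [PseudoMetricSpace α] {K : Set α}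
    {c : α} {r : ℝ} (hK : IsCompact K) (hc : K ⊆ ball c r) : ∃ m < r, K ⊆ closedBall c m :=
  hK.exists_forall_le' (α := ℝᵒᵈ) (f := fun z => dist z c) (by fun_prop) hc

section SeminormedSpace

variable {E : Type*} [SeminormedAddCommGroup E] [NormedSpace ℝ E]

theorem add_smul_sub_mem_ball_of_mem_closedBall_of_mem_ball {x y z : E} {r t : ℝ}
    (hy : y ∈ closedBall z r) (hx : x ∈ ball z r) (ht : t ∈ Ioc (0 : ℝ) 1) :
    y + t • (x - y) ∈ ball z r := by
  have hr : r ≠ 0 := (pos_of_mem_ball hx).ne'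
  rw [← closure_ball z hr] at hy
  rw [← isOpen_ball.interior_eq] at hx ⊢
  exact (convex_ball z r).add_smul_sub_mem_interior' hy hx ht

theorem exists_subset_ball_of_inter_sphere_subset_ball {K : Set E} {x y : E} {r : ℝ}
    (hK : IsCompact K) (hy : K ⊆ closedBall y r) (hx : K ∩ sphere y r ⊆ ball x r) :
    ∃ c, K ⊆ ball c r := by
  have far_subset : K \ ball x r ⊆ ball y r := fun z hz =>
    (hy hz.1).lt_of_ne fun hzr => hz.2 (hx ⟨hz.1, hzr⟩)
  obtain ⟨m, hmr, hm⟩ :=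
    exists_lt_subset_closedBall_of_isCompact (hK.diff isOpen_ball) far_subset
  have shift_small : ∀ᶠ t : ℝ in 𝓝[>] 0, m + dist y (y + t • (x - y)) < r := by
    have cont : ContinuousAt (fun t : ℝ => m + dist y (y + t • (x - y))) 0 := by fun_prop
    exact (cont.eventually_lt_const (by simpa using hmr)).filter_mono nhdsWithin_le_nhds
  obtain ⟨t, htr, ht⟩ := (shift_small.and (Ioc_mem_nhdsGT one_pos)).exists
  refine ⟨y + t • (x - y), fun z hz => ?_⟩
  by_cases hzx : z ∈ ball x r
  · rw [mem_ball_comm]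
    exact add_smul_sub_mem_ball_of_mem_closedBall_of_mem_ball
      (mem_closedBall_comm.1 (hy hz)) (mem_ball_comm.1 hzx) ht
  · calc dist z (y + t • (x - y)) ≤ dist z y + dist y (y + t • (x - y)) := dist_triangle _ _ _
      _ ≤ m + dist y (y + t • (x - y)) := by gcongr; exact hm ⟨hz, hzx⟩
      _ < r := htr

end SeminormedSpace

section NormedGroup

variable {E : Type*} [NormedAddCommGroup E] {S K : Set E} {x y c : E} {r : ℝ}

theorem circumradius_le_of_subset_closedBall (hr : 0 ≤ r) (hS : S ⊆ closedBall c r) :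
    circumradius S ≤ r :=
  csInf_le ⟨0, fun _ h => h.1⟩ ⟨hr, c, hS⟩

theorem circumradius_lt_of_isCompact_of_subset_ball (hK : IsCompact K) (hr : 0 < r)
    (hc : K ⊆ ball c r) : circumradius K < r := by
  obtain ⟨m, hmr, hm⟩ := exists_lt_subset_closedBall_of_isCompact hK hc
  calc circumradius K ≤ max m 0 :=
        circumradius_le_of_subset_closedBall (le_max_right m 0)
          (hm.trans (closedBall_subset_closedBall (le_max_left m 0)))
    _ < r := max_lt hmr hr

theorem circumradius_lt_of_inter_sphere_subset_ball [NormedSpace ℝ E] (hK : IsCompact K)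
    (hr : 0 < r) (hy : K ⊆ closedBall y r) (hx : K ∩ sphere y r ⊆ ball x r) :
    circumradius K < r := by
  obtain ⟨c, hc⟩ := exists_subset_ball_of_inter_sphere_subset_ball hK hy hx
  exact circumradius_lt_of_isCompact_of_subset_ball hK hr hc

theorem isClosed_ballHull (S : Set E) : IsClosed (ballHull S) :=
  isClosed_biInter fun _ _ => isClosed_closedBall

theorem IsBConvexBody.isCompact [ProperSpace E] (hK : IsBConvexBody K) : IsCompact K := by
  obtain ⟨bounded, -, hull_eq⟩ := hK
  exact isCompact_of_isClosed_isBounded (hull_eq ▸ isClosed_ballHull K) bounded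

end NormedGroup

theorem stmt_18_general {E : Type*} [NormedAddCommGroup E] [NormedSpace ℝ E]
    (K : Set E) (hK : IsCompact K) (hbb : ¬ circumradius K < 1) :
    bExp K = ∅ := by
  rw [eq_empty_iff_forall_notMem]
  rintro x ⟨y, hy, face_eq⟩
  refine hbb (circumradius_lt_of_inter_sphere_subset_ball (x := x) hK one_pos hy ?_)
  rw [face_eq, singleton_subset_iff]
  exact mem_ball_self one_pos

theorem stmt_18 {E : Type*} [NormedAddCommGroup E] [NormedSpace ℝ E]
    [FiniteDimensional ℝ E] [Nontrivial E]
    (K : Set E) (hK : IsBConvexBody K) (hbb : ¬ circumradius K < 1) :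
    bExp K = ∅ :=
  have := FiniteDimensional.proper_real E
  stmt_18_general K hK.isCompact hbb
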